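/- Let T > 0, c > 0, b ≤ 0, ρ ∈ (−1, 0], a > 0 and p ∈ ℝ, and set b̃ = b + ρcp. Suppose y, z, q : [0,T] → ℝ are differentiable and satisfy the correlated Stein–Stein Hamiltonian system y' = z²(p − 1/2) + ρczq, z' = b̃z + c²q, q' = pz(1 − p) − b̃q, with y(0) = z(0) = 0, y(T) = a and q(T) = 0. Then p > 1, χ² := c²p(p − 1) − b̃² > 0, and, writing χ > 0 for its square root and r := χT, one has r·cos r = b̃T·sin r, p = (1/(2(1 − ρ²)))·[(1 + 2ρb/c) + √((1 + 2ρb/c)² + 4(1 − ρ²)·(b²/c² + r²/(c²T²)))], the quantity D := (c²(2p − 1) − 2ρc·b̃)·(2r − sin(2r)) + 2ρc·(r/T)·(1 − cos(2r)) is strictly positive, and q(0)² = 8r³a/(c²T³·D). -/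

import Mathlib

/-- The unique positive root `p⁺(r)` of the quadratic
`c²p(p−1) − (b + ρcp)² = r²/T²` in the correlated Stein–Stein model. -/
noncomputable def pPlus (b c T ρ r : ℝ) : ℝ :=
  (1 / (2 * (1 - ρ ^ 2))) * ((1 + 2 * ρ * b / c)
    + Real.sqrt ((1 + 2 * ρ * b / c) ^ 2
        + 4 * (1 - ρ ^ 2) * (b ^ 2 / c ^ 2 + r ^ 2 / (c ^ 2 * T ^ 2))))

/-! The velocity `w = b̃z + c²q` satisfies `z' = w` and `w' = -χ²z`, so `(z, w)` is a linear
oscillator with `z(0) = 0` and, by transversality, `w(T) = b̃z(T)`. The combination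
`F = y - ρ/(2c) z²` has `F' = (p - 1/2 - ρb̃/c) z²`; its growth from `0` to `F(T) > 0` gives
`p > 0`, hence `b̃ ≤ 0`. If `χ² ≤ 0`, then `zw` is nondecreasing from `0` to `b̃z(T)² ≤ 0`, which
forces `z = 0`, so that `y` never reaches `a`. Therefore `χ² > 0`, `χz = c²q(0) sin(χt)` and
`w = c²q(0) cos(χt)`, and the condition `w(T) = b̃z(T)` becomes the equation for `r`. The positivity
of `p` selects the root `p⁺(r)`, and integrating `sin²` in `F'` gives `q(0)²`.
-/

open Set Real

theorem eq_of_hasDerivWithinAt_zero {E : Type*} [NormedAddCommGroup E] [NormedSpace ℝ E]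
    {f : ℝ → E} {s : Set ℝ} (hs : Convex ℝ s) (hf : ∀ t ∈ s, HasDerivWithinAt f 0 s t)
    {t u : ℝ} (ht : t ∈ s) (hu : u ∈ s) : f t = f u := by
  have h := hs.norm_image_sub_le_of_norm_hasDerivWithin_le hf (fun _ _ => norm_zero.le) hu ht
  rwa [zero_mul, norm_le_zero_iff, sub_eq_zero] at h

theorem hasDerivAt_sin_mul (χ t : ℝ) :
    HasDerivAt (fun t => sin (χ * t)) (χ * cos (χ * t)) t := by
  simpa [mul_comm] using ((hasDerivAt_id t).const_mul χ).sin

theorem hasDerivAt_cos_mul (χ t : ℝ) :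
    HasDerivAt (fun t => cos (χ * t)) (-(χ * sin (χ * t))) t := by
  simpa [mul_comm] using ((hasDerivAt_id t).const_mul χ).cos

theorem hasDerivAt_two_mul_sub_sin_two_mul (χ t : ℝ) :
    HasDerivAt (fun t => 2 * (χ * t) - sin (2 * (χ * t))) (4 * χ * sin (χ * t) ^ 2) t := by
  have hlin : HasDerivAt (fun t => 2 * (χ * t)) (2 * χ) t := by
    simpa using ((hasDerivAt_id t).const_mul χ).const_mul 2
  refine (hlin.sub hlin.sin).congr_deriv ?_
  rw [cos_two_mul]
  linear_combination (-4 * χ) * sin_sq_add_cos_sq (χ * t)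

theorem four_mul_sub_of_hasDerivWithinAt_mul_sin_sq {s : Set ℝ} {f : ℝ → ℝ} {A χ t : ℝ}
    (hs : Convex ℝ s) (h0 : 0 ∈ s)
    (hf : ∀ t ∈ s, HasDerivWithinAt f (A * sin (χ * t) ^ 2) s t) (ht : t ∈ s) :
    4 * χ * (f t - f 0) = A * (2 * (χ * t) - sin (2 * (χ * t))) := by
  have h := eq_of_hasDerivWithinAt_zero
    (f := fun t => 4 * χ * f t - A * (2 * (χ * t) - sin (2 * (χ * t)))) hs
    (fun u hu => (((hf u hu).const_mul (4 * χ)).sub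
      ((hasDerivAt_two_mul_sub_sin_two_mul χ u).hasDerivWithinAt.const_mul A)).congr_deriv
        (by ring)) ht h0
  simp only [mul_zero, sin_zero, sub_zero] at h
  linear_combination h

/- The phase point `(χ x, v)` rotates with angular speed `χ`; its coordinates in the co-rotating
frame are constant. -/
theorem harmonicOscillator_eq {s : Set ℝ} {χ t : ℝ} {x v : ℝ → ℝ} (hs : Convex ℝ s)
    (h0 : 0 ∈ s) (hx : ∀ t ∈ s, HasDerivWithinAt x (v t) s t)
    (hv : ∀ t ∈ s, HasDerivWithinAt v (-χ ^ 2 * x t) s t) (ht : t ∈ s) :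
    χ * x t = χ * x 0 * cos (χ * t) + v 0 * sin (χ * t) ∧
      v t = v 0 * cos (χ * t) - χ * x 0 * sin (χ * t) := by
  have hsin (u : ℝ) := (hasDerivAt_sin_mul χ u).hasDerivWithinAt (s := s)
  have hcos (u : ℝ) := (hasDerivAt_cos_mul χ u).hasDerivWithinAt (s := s)
  have hfst : χ * x t * cos (χ * t) - v t * sin (χ * t) = χ * x 0 := by
    have h := eq_of_hasDerivWithinAt_zero
      (f := fun t => χ * x t * cos (χ * t) - v t * sin (χ * t)) hs
      (fun u hu => ((((hx u hu).const_mul χ).mul (hcos u)).sub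
        ((hv u hu).mul (hsin u))).congr_deriv (by ring)) ht h0
    simpa using h
  have hsnd : χ * x t * sin (χ * t) + v t * cos (χ * t) = v 0 := by
    have h := eq_of_hasDerivWithinAt_zero
      (f := fun t => χ * x t * sin (χ * t) + v t * cos (χ * t)) hs
      (fun u hu => ((((hx u hu).const_mul χ).mul (hsin u)).add
        ((hv u hu).mul (hcos u))).congr_deriv (by ring)) ht h0
    simpa using h
  constructor
  · linear_combination cos (χ * t) * hfst + sin (χ * t) * hsnd
      - χ * x t * sin_sq_add_cos_sq (χ * t)
  · linear_combination cos (χ * t) * hsnd - sin (χ * t) * hfst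
      - v t * sin_sq_add_cos_sq (χ * t)

/- `x v` is nondecreasing, so the boundary conditions force it to vanish, and `2 x v` is the
derivative of `x ^ 2`. -/
theorem eq_zero_of_hasDerivWithinAt_nonneg_mul {t₀ t₁ : ℝ} {k x v : ℝ → ℝ}
    (hx : ∀ t ∈ Icc t₀ t₁, HasDerivWithinAt x (v t) (Icc t₀ t₁) t)
    (hv : ∀ t ∈ Icc t₀ t₁, HasDerivWithinAt v (k t * x t) (Icc t₀ t₁) t)
    (hk : ∀ t ∈ Icc t₀ t₁, 0 ≤ k t) (hx₀ : x t₀ = 0) (hxv₁ : x t₁ * v t₁ ≤ 0) :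
    ∀ t ∈ Icc t₀ t₁, x t = 0 := by
  intro t ht
  have hle : t₀ ≤ t₁ := ht.1.trans ht.2
  have hxv (u : ℝ) (hu : u ∈ Icc t₀ t₁) := (hx u hu).mul (hv u hu)
  have hmono : MonotoneOn (x * v) (Icc t₀ t₁) :=
    monotoneOn_of_hasDerivWithinAt_nonneg (convex_Icc t₀ t₁) (HasDerivWithinAt.continuousOn hxv)
      (fun u hu => (hxv u (interior_subset hu)).mono interior_subset)
      (fun u hu => by nlinarith [hk u (interior_subset hu), sq_nonneg (x u), sq_nonneg (v u)])
  have hxv_zero (u : ℝ) (hu : u ∈ Icc t₀ t₁) : x u * v u = 0 := by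
    apply le_antisymm
    · exact (hmono hu (right_mem_Icc.2 hle) hu.2).trans hxv₁
    · simpa [hx₀] using hmono (left_mem_Icc.2 hle) hu hu.1
  have hsq : x t ^ 2 = x t₀ ^ 2 :=
    eq_of_hasDerivWithinAt_zero (f := fun t => x t ^ 2) (convex_Icc t₀ t₁)
      (fun u hu => ((hx u hu).pow 2).congr_deriv
        (by push_cast; linear_combination 2 * hxv_zero u hu)) ht (left_mem_Icc.2 hle)
  simpa [hx₀] using hsq

theorem eq_quadratic_formula_of_pos {A B C x : ℝ} (hA : 0 < A) (hC : 0 ≤ C) (hx : 0 < x)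
    (h : A * x ^ 2 = B * x + C) : x = 1 / (2 * A) * (B + √(B ^ 2 + 4 * A * C)) := by
  have hvertex : 0 ≤ 2 * A * x - B := by
    have : 0 ≤ A * x - B := nonneg_of_mul_nonneg_left (by linarith : 0 ≤ (A * x - B) * x) hx
    linarith [mul_pos hA hx]
  have hdiscrim : B ^ 2 + 4 * A * C = (2 * A * x - B) ^ 2 := by
    linear_combination (-4 * A) * h
  rw [hdiscrim, sqrt_sq hvertex]
  field_simp
  ring

/-- The squared frequency `χ²` of the `(z, q)`-subsystem, as a function of the drift `β = b̃`. -/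
def steinSteinFreqSq (c β p : ℝ) : ℝ :=
  c ^ 2 * p * (p - 1) - β ^ 2

theorem one_lt_of_steinSteinFreqSq_pos {c β p : ℝ} (hp : 0 < p)
    (h : 0 < steinSteinFreqSq c β p) : 1 < p := by
  have hmul : 0 < c ^ 2 * p * (p - 1) := by
    unfold steinSteinFreqSq at h
    linarith [sq_nonneg β]
  exact sub_pos.1 (pos_of_mul_pos_right hmul (by positivity))

theorem eq_pPlus {b c T ρ p r : ℝ} (hc : c ≠ 0) (hρ : 0 < 1 - ρ ^ 2) (hp : 0 < p)
    (h : steinSteinFreqSq c (b + ρ * c * p) p = r ^ 2 / T ^ 2) : p = pPlus b c T ρ r := by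
  refine eq_quadratic_formula_of_pos hρ (by positivity) hp ?_
  rw [mul_comm (c ^ 2), ← div_div, ← h, steinSteinFreqSq]
  field_simp
  ring

/-- The quantity `D` at time `T` and phase `r = χT`, as a function of the drift `β = b̃`. -/
noncomputable def steinSteinArrivalFactor (c β ρ p T r : ℝ) : ℝ :=
  (c ^ 2 * (2 * p - 1) - 2 * ρ * c * β) * (2 * r - sin (2 * r))
    + 2 * ρ * c * (r / T) * (1 - cos (2 * r))

/-- The correlated Stein–Stein Hamiltonian system on the time set `s`, at constant momentum `p`.
The drift `b̃ = b + ρcp` is a free parameter `β`, since the dynamics do not involve `b`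
otherwise. -/
structure IsSteinSteinTrajectory (s : Set ℝ) (c β ρ p : ℝ) (y z q : ℝ → ℝ) : Prop where
  y_deriv : ∀ t ∈ s, HasDerivWithinAt y (z t ^ 2 * (p - 1 / 2) + ρ * c * z t * q t) s t
  z_deriv : ∀ t ∈ s, HasDerivWithinAt z (β * z t + c ^ 2 * q t) s t
  q_deriv : ∀ t ∈ s, HasDerivWithinAt q (p * z t * (1 - p) - β * q t) s t

namespace IsSteinSteinTrajectory

variable {s : Set ℝ} {c β ρ p T t χ : ℝ} {y z q : ℝ → ℝ}

theorem hasDerivWithinAt_velocity (h : IsSteinSteinTrajectory s c β ρ p y z q) (ht : t ∈ s) :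
    HasDerivWithinAt (fun t => β * z t + c ^ 2 * q t) (-steinSteinFreqSq c β p * z t) s t :=
  (((h.z_deriv t ht).const_mul β).add ((h.q_deriv t ht).const_mul (c ^ 2))).congr_deriv
    (by rw [steinSteinFreqSq]; ring)

/- Subtracting `ρ / (2c) * z²` removes the mixed term `z q` from the equation for `y`. -/
theorem hasDerivWithinAt_sub_sq (h : IsSteinSteinTrajectory s c β ρ p y z q) (hc : c ≠ 0)
    (ht : t ∈ s) :
    HasDerivWithinAt (fun t => y t - ρ / (2 * c) * z t ^ 2)
      ((p - 1 / 2 - ρ * β / c) * z t ^ 2) s t := by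
  refine ((h.y_deriv t ht).sub (((h.z_deriv t ht).pow 2).const_mul (ρ / (2 * c)))).congr_deriv ?_
  push_cast
  field_simp
  ring

theorem exists_ne_zero (h : IsSteinSteinTrajectory s c β ρ p y z q) (hs : Convex ℝ s)
    {t₀ t₁ : ℝ} (h₀ : t₀ ∈ s) (h₁ : t₁ ∈ s) (hy : y t₀ ≠ y t₁) : ∃ t ∈ s, z t ≠ 0 := by
  contrapose! hy
  exact eq_of_hasDerivWithinAt_zero hs
    (fun t ht => (h.y_deriv t ht).congr_deriv (by simp [hy t ht])) h₀ h₁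

theorem sub_sq_slope_pos (h : IsSteinSteinTrajectory (Icc 0 T) c β ρ p y z q) (hT : 0 ≤ T)
    (hc : 0 < c) (hρ : ρ ≤ 0) (hz0 : z 0 = 0) (hy : y 0 < y T) :
    0 < p - 1 / 2 - ρ * β / c := by
  by_contra! hslope
  have hderiv (t : ℝ) (ht : t ∈ Icc 0 T) := h.hasDerivWithinAt_sub_sq hc.ne' ht
  have hanti : AntitoneOn (fun t => y t - ρ / (2 * c) * z t ^ 2) (Icc 0 T) :=
    antitoneOn_of_hasDerivWithinAt_nonpos (convex_Icc 0 T)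
      (HasDerivWithinAt.continuousOn hderiv)
      (fun t ht => (hderiv t (interior_subset ht)).mono interior_subset)
      (fun t _ => mul_nonpos_of_nonpos_of_nonneg hslope (sq_nonneg (z t)))
  have hle : y T - ρ / (2 * c) * z T ^ 2 ≤ y 0 := by
    simpa [hz0] using hanti (left_mem_Icc.2 hT) (right_mem_Icc.2 hT) hT
  have hcorr : ρ / (2 * c) * z T ^ 2 ≤ 0 :=
    mul_nonpos_of_nonpos_of_nonneg
      (div_nonpos_of_nonpos_of_nonneg hρ (by positivity)) (sq_nonneg _)
  linarith

theorem momentum_pos {b : ℝ}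
    (h : IsSteinSteinTrajectory (Icc 0 T) c (b + ρ * c * p) ρ p y z q) (hT : 0 ≤ T)
    (hc : 0 < c) (hb : b ≤ 0) (hρ : ρ ≤ 0) (hρ' : 0 < 1 - ρ ^ 2) (hz0 : z 0 = 0)
    (hy : y 0 < y T) : 0 < p := by
  have hρb : 0 ≤ ρ * b / c := div_nonneg (mul_nonneg_of_nonpos_of_nonpos hρ hb) hc.le
  have hslope_eq : p - 1 / 2 - ρ * (b + ρ * c * p) / c
      = p * (1 - ρ ^ 2) - 1 / 2 - ρ * b / c := by
    field_simp
    ring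
  have hslope := h.sub_sq_slope_pos hT hc hρ hz0 hy
  exact pos_of_mul_pos_left (by linarith : 0 < p * (1 - ρ ^ 2)) hρ'.le

theorem freqSq_pos (h : IsSteinSteinTrajectory (Icc 0 T) c β ρ p y z q) (hβ : β ≤ 0)
    (hz0 : z 0 = 0) (hqT : q T = 0) (hz : ∃ t ∈ Icc 0 T, z t ≠ 0) :
    0 < steinSteinFreqSq c β p := by
  obtain ⟨t, ht, hzt⟩ := hz
  by_contra! hfreq
  have hend : z T * (β * z T + c ^ 2 * q T) ≤ 0 := by
    rw [hqT]
    linarith [mul_nonpos_of_nonpos_of_nonneg hβ (sq_nonneg (z T))]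
  exact hzt (eq_zero_of_hasDerivWithinAt_nonneg_mul (k := fun _ => -steinSteinFreqSq c β p)
    h.z_deriv (fun _ => h.hasDerivWithinAt_velocity) (fun _ _ => neg_nonneg.2 hfreq)
    hz0 hend t ht)

theorem eq_sin_and_velocity_eq_cos (h : IsSteinSteinTrajectory s c β ρ p y z q)
    (hs : Convex ℝ s) (h0 : 0 ∈ s) (hχ : χ ^ 2 = steinSteinFreqSq c β p) (hz0 : z 0 = 0)
    (ht : t ∈ s) :
    χ * z t = c ^ 2 * q 0 * sin (χ * t) ∧
      β * z t + c ^ 2 * q t = c ^ 2 * q 0 * cos (χ * t) := by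
  simpa [hz0] using harmonicOscillator_eq hs h0 h.z_deriv
    (fun _ hu => hχ ▸ h.hasDerivWithinAt_velocity hu) ht

theorem transversality (h : IsSteinSteinTrajectory s c β ρ p y z q) (hs : Convex ℝ s)
    (h0 : 0 ∈ s) (hc : c ≠ 0) (hχ : χ ^ 2 = steinSteinFreqSq c β p) (hz0 : z 0 = 0)
    (hq0 : q 0 ≠ 0) (ht : t ∈ s) (hqt : q t = 0) :
    χ * cos (χ * t) = β * sin (χ * t) := by
  obtain ⟨hsin, hcos⟩ := h.eq_sin_and_velocity_eq_cos hs h0 hχ hz0 ht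
  apply mul_left_cancel₀ (mul_ne_zero (pow_ne_zero 2 hc) hq0)
  linear_combination β * hsin - χ * hcos + χ * c ^ 2 * hqt

theorem eight_mul_phase_pow_mul_eq (h : IsSteinSteinTrajectory s c β ρ p y z q)
    (hs : Convex ℝ s) (h0 : 0 ∈ s) (hc : c ≠ 0) (hχ : χ ^ 2 = steinSteinFreqSq c β p)
    (hy0 : y 0 = 0) (hz0 : z 0 = 0) (ht : t ∈ s) (ht0 : t ≠ 0) :
    8 * (χ * t) ^ 3 * y t
      = q 0 ^ 2 * (c ^ 2 * t ^ 3 * steinSteinArrivalFactor c β ρ p t (χ * t)) := by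
  have hz_sq (u : ℝ) (hu : u ∈ s) :
      χ ^ 2 * z u ^ 2 = (c ^ 2 * q 0) ^ 2 * sin (χ * u) ^ 2 := by
    rw [← mul_pow, (h.eq_sin_and_velocity_eq_cos hs h0 hχ hz0 hu).1, mul_pow]
  have hderiv (u : ℝ) (hu : u ∈ s) :
      HasDerivWithinAt (fun u => χ ^ 2 * (y u - ρ / (2 * c) * z u ^ 2))
        ((p - 1 / 2 - ρ * β / c) * (c ^ 2 * q 0) ^ 2 * sin (χ * u) ^ 2) s u :=
    ((h.hasDerivWithinAt_sub_sq hc hu).const_mul (χ ^ 2)).congr_deriv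
      (by linear_combination (p - 1 / 2 - ρ * β / c) * hz_sq u hu)
  have hint := four_mul_sub_of_hasDerivWithinAt_mul_sin_sq hs h0 hderiv ht
  have hcos : cos (2 * (χ * t)) = 1 - 2 * sin (χ * t) ^ 2 := by
    rw [cos_two_mul, cos_sq']
    ring
  simp only [hy0, hz0] at hint
  rw [steinSteinArrivalFactor, hcos]
  linear_combination (norm := skip) 2 * t ^ 3 * hint + 4 * χ * t ^ 3 * ρ / c * hz_sq t ht
  field_simp
  ring

end IsSteinSteinTrajectory

/-- Necessary conditions satisfied by any solution of the correlated Stein–Stein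
Hamiltonian boundary value problem: `p > 1`, `χ² := c²p(p−1) − b̃² > 0`, the
transversality equation for `r = χT`, the formula `p = p⁺(r)`, positivity of the
normalizing quantity `D`, and the value of `q(0)²`. -/
theorem stein_stein_correlated_bvp_necessary
    (T c b ρ a p : ℝ) (hT : 0 < T) (hc : 0 < c) (hb : b ≤ 0)
    (hρ : ρ ∈ Set.Ioc (-1 : ℝ) 0) (ha : 0 < a)
    (y z q : ℝ → ℝ)
    (hy : ∀ t ∈ Set.Icc (0 : ℝ) T,
      HasDerivWithinAt y (z t ^ 2 * (p - 1 / 2) + ρ * c * z t * q t) (Set.Icc (0 : ℝ) T) t)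
    (hz : ∀ t ∈ Set.Icc (0 : ℝ) T,
      HasDerivWithinAt z ((b + ρ * c * p) * z t + c ^ 2 * q t) (Set.Icc (0 : ℝ) T) t)
    (hq : ∀ t ∈ Set.Icc (0 : ℝ) T,
      HasDerivWithinAt q (p * z t * (1 - p) - (b + ρ * c * p) * q t) (Set.Icc (0 : ℝ) T) t)
    (hy0 : y 0 = 0) (hz0 : z 0 = 0) (hyT : y T = a) (hqT : q T = 0) :
    1 < p ∧ 0 < c ^ 2 * p * (p - 1) - (b + ρ * c * p) ^ 2 ∧
    ∃ χ : ℝ, 0 < χ ∧ χ ^ 2 = c ^ 2 * p * (p - 1) - (b + ρ * c * p) ^ 2 ∧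
      (χ * T) * Real.cos (χ * T) = (b + ρ * c * p) * T * Real.sin (χ * T) ∧
      p = pPlus b c T ρ (χ * T) ∧
      0 < (c ^ 2 * (2 * p - 1) - 2 * ρ * c * (b + ρ * c * p))
            * (2 * (χ * T) - Real.sin (2 * (χ * T)))
          + 2 * ρ * c * ((χ * T) / T) * (1 - Real.cos (2 * (χ * T))) ∧
      q 0 ^ 2 = 8 * (χ * T) ^ 3 * a / (c ^ 2 * T ^ 3 *
          ((c ^ 2 * (2 * p - 1) - 2 * ρ * c * (b + ρ * c * p))
              * (2 * (χ * T) - Real.sin (2 * (χ * T)))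
            + 2 * ρ * c * ((χ * T) / T) * (1 - Real.cos (2 * (χ * T))))) := by
  have h : IsSteinSteinTrajectory (Icc 0 T) c (b + ρ * c * p) ρ p y z q := ⟨hy, hz, hq⟩
  have h0 : 0 ∈ Icc 0 T := left_mem_Icc.2 hT.le
  have hTm : T ∈ Icc 0 T := right_mem_Icc.2 hT.le
  have hyT_pos : y 0 < y T := by rwa [hy0, hyT]
  have hρ_sq : 0 < 1 - ρ ^ 2 := by nlinarith [hρ.1, hρ.2]
  have hp : 0 < p := h.momentum_pos hT.le hc hb hρ.2 hρ_sq hz0 hyT_pos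
  have hdrift : b + ρ * c * p ≤ 0 := by
    linarith [mul_nonpos_of_nonpos_of_nonneg hρ.2 (mul_pos hc hp).le]
  have hfreq : 0 < steinSteinFreqSq c (b + ρ * c * p) p :=
    h.freqSq_pos hdrift hz0 hqT (h.exists_ne_zero (convex_Icc 0 T) h0 hTm hyT_pos.ne)
  obtain ⟨χ, hχ, hχ_sq⟩ : ∃ χ, 0 < χ ∧ χ ^ 2 = steinSteinFreqSq c (b + ρ * c * p) p :=
    ⟨√_, sqrt_pos.2 hfreq, sq_sqrt hfreq.le⟩
  have harrival :=
    h.eight_mul_phase_pow_mul_eq (convex_Icc 0 T) h0 hc.ne' hχ_sq hy0 hz0 hTm hT.ne'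
  rw [hyT] at harrival
  have hprod_pos := harrival ▸ (by positivity : 0 < 8 * (χ * T) ^ 3 * a)
  have hq0 : q 0 ≠ 0 := fun hq0 => hprod_pos.ne' (by simp [hq0])
  have hD : 0 < c ^ 2 * T ^ 3 * steinSteinArrivalFactor c (b + ρ * c * p) ρ p T (χ * T) :=
    pos_of_mul_pos_right hprod_pos (sq_nonneg _)
  refine ⟨one_lt_of_steinSteinFreqSq_pos hp hfreq, hfreq, χ, hχ, hχ_sq, ?_, ?_,
    pos_of_mul_pos_right hD (by positivity), (eq_div_iff hD.ne').2 harrival.symm⟩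
  · linear_combination T * h.transversality (convex_Icc 0 T) h0 hc.ne' hχ_sq hz0 hq0 hTm hqT
  · refine eq_pPlus hc.ne' hρ_sq hp ?_
    rw [← hχ_sq, mul_pow, mul_div_cancel_right₀ _ (by positivity)]
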